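/- Let F_1,…,F_{n+1} ∈ ℂ[z_1,…,z_n] be polynomials of degrees d_1,…,d_{n+1} whose homogenizations have no common zero in ℙ^n (i.e., no common zeros in ℂ^n and none at infinity). Then there exist polynomials Q_j with Σ_{j=1}^{n+1} F_j Q_j = 1 and deg(F_j Q_j) ≤ d_1 + ⋯ + d_{n+1} − n for each j. -/

import Mathlib

open MvPolynomial

/-- The `d`-homogenization of `F ∈ ℂ[z_1,…,z_n]`. -/
noncomputable def homogenize (n d : ℕ) (F : MvPolynomial (Fin n) ℂ) :
    MvPolynomial (Fin (n + 1)) ℂ :=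
  ∑ s ∈ F.support,
    monomial (Finsupp.cons (d - s.sum fun _ e => e) s) (MvPolynomial.coeff s F)

/-!
Homogenize the `F j` to forms `f j` in `n + 1` variables; by the Nullstellensatz some power of every
variable lies in the ideal `(f j)`. Replace the forms one at a time by generic linear forms keeping
this property (prime avoidance and Krull's principal ideal theorem), until they are coordinates.

Both facts we want are clear for coordinates and pass back along a replacement of `f` by a linear
form `l` with the other forms, generating an ideal `J`, fixed. First, the forms are a regular
sequence in every order: `l` is regular modulo `J` and `l ^ m ≡ f u` modulo `J`, hence `f` and `u`
are regular modulo `J`. Second, all forms of degree greater than `∑ (d j - 1)` lie in the ideal: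
multiplication by `u` embeds the quotient by `(f) + J` into the quotient by `(l ^ m) + J`,
shifting degrees by `m - d`.

Applying the degree bound to a power of the homogenizing variable and dehomogenizing gives the
Bézout identity.
-/

section Ideal

lemma image_update_compl {α ι : Type*} [DecidableEq ι] (a : ι → α) (i : ι) (x : α) :
    Function.update a i x '' {i}ᶜ = a '' {i}ᶜ :=
  Set.image_congr fun _ hj ↦ Function.update_of_ne hj _ _

variable {A : Type*} [CommRing A] {J : Ideal A} {a f g h : A}

lemma mem_span_singleton_sup_iff : h ∈ Ideal.span {g} ⊔ J ↔ ∃ q, h - g * q ∈ J := by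
  simp only [Submodule.mem_sup, Ideal.mem_span_singleton]
  constructor
  · rintro ⟨_, ⟨q, rfl⟩, y, hy, rfl⟩
    exact ⟨q, by simpa using hy⟩
  · rintro ⟨q, hq⟩
    exact ⟨g * q, ⟨q, rfl⟩, _, hq, by ring⟩

lemma span_image_insert {ι : Type*} (a : ι → A) (i : ι) (T : Set ι) :
    Ideal.span (a '' insert i T) = Ideal.span {a i} ⊔ Ideal.span (a '' T) := by
  rw [Set.image_insert_eq, Ideal.span_insert]

lemma span_range_eq_sup {ι : Type*} (a : ι → A) (i : ι) :
    Ideal.span (Set.range a) = Ideal.span {a i} ⊔ Ideal.span (a '' {i}ᶜ) := by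
  rw [← span_image_insert, Set.insert_eq, Set.union_compl_self, Set.image_univ]

lemma isSMulRegular_quotient_iff :
    IsSMulRegular (A ⧸ J) f ↔ ∀ x, f * x ∈ J → x ∈ J :=
  isSMulRegular_quotient_iff_mem_of_smul_mem J f

lemma isSMulRegular_quotient_congr (hfg : f - g ∈ J) :
    IsSMulRegular (A ⧸ J) f ↔ IsSMulRegular (A ⧸ J) g := by
  simp only [isSMulRegular_quotient_iff]
  refine forall_congr' fun x ↦ imp_congr_left ?_
  rw [← J.add_mem_iff_left (b := (g - f) * x), ← add_mul, add_sub_cancel]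
  exact J.mul_mem_right x (neg_sub f g ▸ J.neg_mem hfg)

lemma isSMulRegular_quotient_of_pow_mem {m : ℕ} (hg : IsSMulRegular (A ⧸ J) g)
    (hgm : g ^ m ∈ Ideal.span {f} ⊔ J) : IsSMulRegular (A ⧸ J) f := by
  obtain ⟨u, hu⟩ := mem_span_singleton_sup_iff.1 hgm
  exact .of_mul (mul_comm f u ▸ (isSMulRegular_quotient_congr hu).1 (hg.pow m))

lemma isSMulRegular_quotient_span_singleton_sup_swap (ha : IsSMulRegular (A ⧸ J) a)
    (hf : IsSMulRegular (A ⧸ Ideal.span {a} ⊔ J) f) :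
    IsSMulRegular (A ⧸ Ideal.span {f} ⊔ J) a := by
  simp only [isSMulRegular_quotient_iff, mem_span_singleton_sup_iff] at *
  rintro x ⟨q, hq⟩
  obtain ⟨p, hp⟩ := hf q ⟨x, by simpa using J.neg_mem hq⟩
  refine ⟨p, ha _ ?_⟩
  rw [show a * (x - f * p) = a * x - f * q + f * (q - a * p) by ring]
  exact J.add_mem hq (J.mul_mem_left f hp)

end Ideal

/-- A family is permutably regular if it is a weakly regular sequence in every order: each member
is a non-zero-divisor modulo any set of other members. -/
def IsPermutablyRegular {A ι : Type*} [CommRing A] (a : ι → A) : Prop :=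
  ∀ (T : Set ι), ∀ i ∉ T, IsSMulRegular (A ⧸ Ideal.span (a '' T)) (a i)

namespace IsPermutablyRegular

variable {A B ι : Type*} [CommRing A] [CommRing B] {a : ι → A}

lemma map (ha : IsPermutablyRegular a) (φ : A ≃+* B) : IsPermutablyRegular (φ ∘ a) := by
  intro T i hi
  rw [Set.image_comp, ← Ideal.map_span, isSMulRegular_quotient_iff]
  intro y hy
  obtain ⟨x, rfl⟩ := φ.surjective y
  obtain ⟨z, hz, hzx⟩ := (Ideal.mem_map_of_equiv φ _).1 hy
  obtain rfl : z = a i * x := φ.injective (by simpa using hzx)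
  exact Ideal.mem_map_of_mem φ (isSMulRegular_quotient_iff.1 (ha T i hi) x hz)

lemma ne_zero [Nontrivial A] (ha : IsPermutablyRegular a) (i : ι) : a i ≠ 0 := by
  intro h0
  have h1 : (1 : A) ∈ Ideal.span (a '' ∅) :=
    isSMulRegular_quotient_iff.1 (ha ∅ i (Set.notMem_empty i)) 1 (by simp [h0])
  simp at h1

end IsPermutablyRegular

section Graded

variable {A σ : Type*} [CommRing A] [SetLike σ A] [AddSubmonoidClass σ A]
  {𝒜 : ℕ → σ} [GradedRing 𝒜] {J : Ideal A} {d e : ℕ} {a f g h : A}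

lemma exists_mul_eq_decompose_mul (ha : a ∈ 𝒜 d) (q : A) (e : ℕ) :
    ∃ p, a * p = DirectSum.decompose 𝒜 (a * q) e := by
  by_cases hde : d ≤ e
  · exact ⟨_, (DirectSum.coe_decompose_mul_of_left_mem_of_le 𝒜 ha hde).symm⟩
  · exact ⟨0, by rw [mul_zero, DirectSum.coe_decompose_mul_of_left_mem_of_not_le 𝒜 ha hde]⟩

lemma exists_sum_mul_eq_of_mem_span_range {ι : Type*} [Fintype ι] {a : ι → A} {d : ι → ℕ}
    (ha : ∀ i, a i ∈ 𝒜 (d i)) (hh : h ∈ 𝒜 e) (hmem : h ∈ Ideal.span (Set.range a)) :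
    ∃ q : ι → A, ∑ i, a i * q i = h ∧ ∀ i, a i * q i ∈ 𝒜 e := by
  obtain ⟨c, hc⟩ := Ideal.mem_span_range_iff_exists_fun.1 hmem
  choose q hq using fun i ↦ exists_mul_eq_decompose_mul (ha i) (c i) e
  refine ⟨q, ?_, fun i ↦ hq i ▸ SetLike.coe_mem _⟩
  calc ∑ i, a i * q i = GradedRing.proj 𝒜 e (∑ i, a i * c i) := by
        simp only [hq, map_sum, GradedRing.proj_apply]
    _ = h := by
        simp only [mul_comm (a _), hc, GradedRing.proj_apply, DirectSum.decompose_of_mem_same 𝒜 hh]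

lemma exists_sub_mul_mem_of_isHomogeneous (hJ : J.IsHomogeneous 𝒜) (hg : g ∈ 𝒜 d) (hh : h ∈ 𝒜 e)
    (hmem : h ∈ Ideal.span {g} ⊔ J) :
    h ∈ J ∨ ∃ k, d + k = e ∧ ∃ q ∈ 𝒜 k, h - g * q ∈ J := by
  obtain ⟨q, hq⟩ := mem_span_singleton_sup_iff.1 hmem
  have hcomp := hJ e hq
  rw [← GradedRing.proj_apply, map_sub, GradedRing.proj_apply, GradedRing.proj_apply,
    DirectSum.decompose_of_mem_same 𝒜 hh] at hcomp
  by_cases hde : d ≤ e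
  · rw [DirectSum.coe_decompose_mul_of_left_mem_of_le 𝒜 hg hde] at hcomp
    exact .inr ⟨e - d, by omega, _, SetLike.coe_mem _, hcomp⟩
  · rw [DirectSum.coe_decompose_mul_of_left_mem_of_not_le 𝒜 hg hde, sub_zero] at hcomp
    exact .inl hcomp

lemma mem_of_forall_decompose_mem (hh : ∀ e, (DirectSum.decompose 𝒜 h e : A) ∈ J) : h ∈ J := by
  classical
  rw [← DirectSum.sum_support_decompose 𝒜 h]
  exact J.sum_mem fun e _ ↦ hh e

/-- The graded Nakayama argument: dividing by `a` lowers the degree of a counterexample. -/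
lemma isSMulRegular_quotient_of_span_singleton_sup (hJ : J.IsHomogeneous 𝒜) (hf : f ∈ 𝒜 d)
    (ha : a ∈ 𝒜 e) (he : 0 < e) (hfa : IsSMulRegular (A ⧸ Ideal.span {a} ⊔ J) f)
    (haJ : IsSMulRegular (A ⧸ J) a) : IsSMulRegular (A ⧸ J) f := by
  rw [isSMulRegular_quotient_iff] at *
  have homogeneous_case : ∀ n, ∀ v ∈ 𝒜 n, f * v ∈ J → v ∈ J := by
    intro n
    induction n using Nat.strong_induction_on with
    | _ n ih =>
      intro v hv hfv
      obtain hvJ | ⟨k, hk, q, hq, hvq⟩ :=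
        exists_sub_mul_mem_of_isHomogeneous hJ ha hv (hfa v (Ideal.mem_sup_right hfv))
      · exact hvJ
      have hfq : f * q ∈ J := haJ _ <| by
        rw [show a * (f * q) = f * v - f * (v - a * q) by ring]
        exact J.sub_mem hfv (J.mul_mem_left f hvq)
      rw [← sub_add_cancel v (a * q)]
      exact J.add_mem hvq (J.mul_mem_left a (ih k (by omega) q hq hfq))
  intro v hfv
  refine mem_of_forall_decompose_mem (𝒜 := 𝒜) fun n ↦ homogeneous_case n _ (SetLike.coe_mem _) ?_
  have hcomp := hJ (d + n) hfv
  rwa [DirectSum.coe_decompose_mul_of_left_mem_of_le 𝒜 hf (by omega), Nat.add_sub_cancel_left]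
    at hcomp

lemma mem_span_pow_sup (hJ : J.IsHomogeneous 𝒜) {c δ : ℕ} (hg : g ∈ 𝒜 δ)
    (hc : ∀ e, c ≤ e → ∀ x ∈ 𝒜 e, x ∈ Ideal.span {g} ⊔ J) (r : ℕ) (he : c + r * δ ≤ e + δ)
    (hh : h ∈ 𝒜 e) : h ∈ Ideal.span {g ^ r} ⊔ J := by
  induction r generalizing e h with
  | zero => simp
  | succ r ih =>
    rw [Nat.succ_mul] at he
    obtain hhJ | ⟨k, hk, q, hq, hhq⟩ :=
      exists_sub_mul_mem_of_isHomogeneous hJ hg hh (hc e (by omega) h hh)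
    · exact Ideal.mem_sup_right hhJ
    obtain ⟨p, hp⟩ := mem_span_singleton_sup_iff.1 (ih (by omega) hq)
    refine mem_span_singleton_sup_iff.2 ⟨p, ?_⟩
    rw [show h - g ^ (r + 1) * p = (h - g * q) + g * (q - g ^ r * p) by ring]
    exact J.add_mem hhq (J.mul_mem_left g hp)

lemma mem_span_singleton_sup_of_pow_mem (hJ : J.IsHomogeneous 𝒜) {c δ m : ℕ} (hg : g ∈ 𝒜 δ)
    (hgJ : IsSMulRegular (A ⧸ J) g) (hf : f ∈ 𝒜 d) (hgm : g ^ m ∈ Ideal.span {f} ⊔ J)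
    (hc : ∀ e, c ≤ e → ∀ x ∈ 𝒜 e, x ∈ Ideal.span {g} ⊔ J) (he : c + d ≤ e + δ)
    (hh : h ∈ 𝒜 e) : h ∈ Ideal.span {f} ⊔ J := by
  have hgm_mem : g ^ m ∈ 𝒜 (m * δ) := by simpa using SetLike.pow_mem_graded m hg
  obtain hgmJ | ⟨k, hk, u, hu, hfu⟩ := exists_sub_mul_mem_of_isHomogeneous hJ hf hgm_mem hgm
  · exact Ideal.mem_sup_right
      (isSMulRegular_quotient_iff.1 (hgJ.pow m) h (J.mul_mem_right h hgmJ))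
  have hu_reg : IsSMulRegular (A ⧸ J) u := isSMulRegular_quotient_of_pow_mem hgJ
    (mem_span_singleton_sup_iff.2 ⟨f, mul_comm u f ▸ hfu⟩)
  obtain ⟨p, hp⟩ := mem_span_singleton_sup_iff.1 <|
    mem_span_pow_sup hJ hg hc m (by omega) (SetLike.mul_mem_graded hu hh)
  refine mem_span_singleton_sup_iff.2 ⟨p, isSMulRegular_quotient_iff.1 hu_reg _ ?_⟩
  rw [show u * (h - f * p) = (u * h - g ^ m * p) + (g ^ m - f * u) * p by ring]
  exact J.add_mem hp (J.mul_mem_right p hfu)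

end Graded

namespace IsPermutablyRegular

variable {A σ ι : Type*} [CommRing A] [SetLike σ A] [AddSubmonoidClass σ A]
  {𝒜 : ℕ → σ} [GradedRing 𝒜] [Finite ι] {a b : ι → A} {d : ι → ℕ} {S T : Set ι} {f : A} {e : ℕ}

lemma isSMulRegular_of_subset (ha : IsPermutablyRegular a) (had : ∀ i, a i ∈ 𝒜 (d i))
    (hd : ∀ i, 0 < d i) (hf : f ∈ 𝒜 e) (hfS : IsSMulRegular (A ⧸ Ideal.span (a '' S)) f)
    (hTS : T ⊆ S) : IsSMulRegular (A ⧸ Ideal.span (a '' T)) f := by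
  have hhom (U : Set ι) : (Ideal.span (a '' U)).IsHomogeneous 𝒜 :=
    Ideal.homogeneous_span 𝒜 _ (Set.forall_mem_image.2 fun i _ ↦ ⟨d i, had i⟩)
  suffices ∀ U : Set ι, IsSMulRegular (A ⧸ Ideal.span (a '' (T ∪ U))) f →
      IsSMulRegular (A ⧸ Ideal.span (a '' T)) f from
    this S (by rwa [Set.union_eq_right.2 hTS])
  intro U
  induction U, U.toFinite using Set.Finite.induction_on with
  | empty => rw [Set.union_empty]; exact id
  | @insert i U _ _ ih =>
    intro hfU
    rw [Set.union_insert] at hfU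
    by_cases hi : i ∈ T ∪ U
    · exact ih (by rwa [Set.insert_eq_of_mem hi] at hfU)
    · rw [span_image_insert] at hfU
      exact ih (isSMulRegular_quotient_of_span_singleton_sup (hhom _) hf (had i) (hd i) hfU
        (ha _ i hi))

lemma exchange (ha : IsPermutablyRegular a) (had : ∀ i, a i ∈ 𝒜 (d i)) (hd : ∀ i, 0 < d i)
    {i : ι} (hab : Set.EqOn a b {i}ᶜ) (hb : b i ∈ 𝒜 e)
    (hbi : IsSMulRegular (A ⧸ Ideal.span (a '' {i}ᶜ)) (b i)) : IsPermutablyRegular b := by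
  have himage {T : Set ι} (hi : i ∉ T) : b '' T = a '' T :=
    Set.image_congr fun j hj ↦ (hab fun hji ↦ hi (hji ▸ hj)).symm
  have hb_reg {T : Set ι} (hi : i ∉ T) : IsSMulRegular (A ⧸ Ideal.span (a '' T)) (b i) :=
    ha.isSMulRegular_of_subset had hd hb hbi (Set.subset_compl_singleton_iff.2 hi)
  intro T j hj
  by_cases hji : j = i
  · subst hji
    rw [himage hj]
    exact hb_reg hj
  rw [← hab hji]
  by_cases hi : i ∈ T
  · have hiT : i ∉ T \ {i} := fun h ↦ h.2 rfl
    rw [← Set.insert_sdiff_self_of_mem hi, span_image_insert, himage hiT]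
    refine isSMulRegular_quotient_span_singleton_sup_swap (ha _ j fun h ↦ hj h.1) ?_
    rw [← span_image_insert]
    exact hb_reg (by simp [Ne.symm hji])
  · rw [himage hi]
    exact ha T j hj

end IsPermutablyRegular

lemma exists_mem_forall_notMem {k E ι : Type*} [DivisionRing k] [Infinite k] [AddCommGroup E]
    [Module k E] [Finite ι] {V : Submodule k E} {p : ι → Submodule k E} (hp : ∀ i, ¬ V ≤ p i) :
    ∃ v ∈ V, ∀ i, v ∉ p i := by
  by_contra! h
  have hcover : ⋃ i, ((p i).comap V.subtype : Set V) = Set.univ :=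
    Set.eq_univ_of_forall fun v ↦ Set.mem_iUnion.2 (h v v.2)
  obtain ⟨i, hi⟩ := Subspace.exists_eq_top_of_iUnion_eq_univ hcover
  exact hp i (Submodule.comap_subtype_eq_top.1 hi)

section Polynomial

attribute [local instance] MvPolynomial.gradedAlgebra

section CommRing

variable {σ R : Type*} [CommRing R]

lemma isPermutablyRegular_X : IsPermutablyRegular (X : σ → MvPolynomial σ R) := by
  intro T i hi
  rw [isSMulRegular_quotient_iff]
  intro p hp
  rw [mem_ideal_span_X_image] at hp ⊢
  intro m hm
  obtain ⟨j, hj, hmj⟩ := hp (Finsupp.single i 1 + m) (by simpa using hm)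
  refine ⟨j, hj, ?_⟩
  simpa [show i ≠ j from fun h ↦ hi (h ▸ hj)] using hmj

lemma bijective_aeval_of_adjoin_range_eq_top [IsDomain R] [Finite σ] {a : σ → MvPolynomial σ R}
    (ha : Algebra.adjoin R (Set.range a) = ⊤) : Function.Bijective (aeval (R := R) a) := by
  have : Algebra.IsAlgebraic (Algebra.adjoin R (Set.range a)) (MvPolynomial σ R) := by
    rw [ha]
    exact ⟨fun x ↦ isAlgebraic_algebraMap (⟨x, trivial⟩ : (⊤ : Subalgebra R (MvPolynomial σ R)))⟩
  refine ⟨(Algebra.IsAlgebraic.isTranscendenceBasis_of_lift_le_trdeg_of_finite R a ?_).1, ?_⟩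
  · simp [trdeg_of_isDomain]
  · rw [← AlgHom.range_eq_top, ← Algebra.adjoin_range_eq_range_aeval, ha]

lemma mem_idealOfVars_iff {p : MvPolynomial σ R} : p ∈ idealOfVars σ R ↔ constantCoeff p = 0 := by
  simpa [Finsupp.degree_eq_zero_iff, constantCoeff_eq] using mem_pow_idealOfVars_iff' 1 p

lemma mem_idealOfVars_of_isHomogeneous {p : MvPolynomial σ R} {d : ℕ} (hp : p.IsHomogeneous d)
    (hd : 0 < d) : p ∈ idealOfVars σ R := by
  rw [mem_idealOfVars_iff, constantCoeff_eq]
  exact hp.coeff_eq_zero (by simpa using hd.ne)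

lemma isPrime_idealOfVars [IsDomain R] : (idealOfVars σ R).IsPrime := by
  rw [show idealOfVars σ R = RingHom.ker constantCoeff from Ideal.ext fun _ ↦ mem_idealOfVars_iff]
  exact RingHom.ker_isPrime _

end CommRing

variable {σ k : Type*} [Field k]

lemma le_idealOfVars_of_isHomogeneous {I : Ideal (MvPolynomial σ k)}
    (hI : I.IsHomogeneous (homogeneousSubmodule σ k)) (hI_top : I ≠ ⊤) : I ≤ idealOfVars σ k := by
  intro p hp
  rw [mem_idealOfVars_iff]
  by_contra hp0
  refine hI_top (I.eq_top_of_isUnit_mem (hI 0 hp) ?_)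
  rw [show (DirectSum.decompose (homogeneousSubmodule σ k) p 0 : MvPolynomial σ k) =
    homogeneousComponent 0 p from decomposition.decompose'_apply p 0, homogeneousComponent_zero]
  exact (Ne.isUnit hp0).map C

variable {s : Set (MvPolynomial σ k)} {f : MvPolynomial σ k}

lemma idealOfVars_mem_minimalPrimes {I : Ideal (MvPolynomial σ k)} (hI : I ≤ idealOfVars σ k)
    (hrad : idealOfVars σ k ≤ I.radical) : idealOfVars σ k ∈ I.minimalPrimes :=
  ⟨⟨isPrime_idealOfVars, hI⟩, fun _ hp _ ↦ hrad.trans (hp.1.radical_le_iff.2 hp.2)⟩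

lemma exists_linear_forall_notMem [Infinite k] {P : Set (Ideal (MvPolynomial σ k))}
    (hP : P.Finite) (hPm : ∀ p ∈ P, ¬ idealOfVars σ k ≤ p) :
    ∃ l, IsHomogeneous l 1 ∧ ∀ p ∈ P, l ∉ p := by
  have := hP.to_subtype
  obtain ⟨l, hl, hlP⟩ := exists_mem_forall_notMem (V := homogeneousSubmodule σ k 1)
    (p := fun p : P ↦ p.1.restrictScalars k) fun p hp ↦ hPm p p.2 <| Ideal.span_le.2 <|
      Set.range_subset_iff.2 fun i ↦ hp (isHomogeneous_X k i)
  exact ⟨l, hl, fun p hp ↦ hlP ⟨p, hp⟩⟩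

lemma exists_linear_idealOfVars_le_radical [Infinite k] [Finite σ]
    (hs : ∀ p ∈ s, SetLike.IsHomogeneousElem (homogeneousSubmodule σ k) p)
    (hm : insert f s ⊆ idealOfVars σ k)
    (hrad : idealOfVars σ k ≤ (Ideal.span (insert f s)).radical) :
    ∃ l, IsHomogeneous l 1 ∧ idealOfVars σ k ≤ (Ideal.span (insert l s)).radical := by
  obtain ⟨l, hl, hl_notMem⟩ := exists_linear_forall_notMem
    (P := {p ∈ (Ideal.span s).minimalPrimes | ¬ idealOfVars σ k ≤ p})
    ((Ideal.finite_minimalPrimes_of_isNoetherianRing _ _).subset (Set.sep_subset _ _))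
    fun p hp ↦ hp.2
  refine ⟨l, hl, ?_⟩
  -- The homogeneous core of a prime over `l` and `s` lying strictly inside the ideal of the
  -- variables is minimal over `s`, by Krull's principal ideal theorem for the single element `f`.
  rw [Ideal.radical_eq_sInf]
  refine le_sInf fun p ⟨hlsp, hp⟩ ↦ ?_
  by_contra hmp
  obtain ⟨hlp, hsp⟩ := Set.insert_subset_iff.1 (Ideal.span_le.1 hlsp)
  set q := (p.homogeneousCore (homogeneousSubmodule σ k)).toIdeal
  have hq_prime : q.IsPrime := hp.homogeneousCore
  have hmq : ¬ idealOfVars σ k ≤ q := fun h ↦ hmp (h.trans (Ideal.toIdeal_homogeneousCore_le _ p))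
  have hqm : q < idealOfVars σ k := lt_of_le_not_ge
    (le_idealOfVars_of_isHomogeneous (HomogeneousIdeal.isHomogeneous _) hq_prime.ne_top) hmq
  have hlq : l ∈ q := Ideal.mem_homogeneousCore_of_homogeneous_of_mem ⟨1, hl⟩ hlp
  have hsq : s ⊆ q := fun x hx ↦ Ideal.mem_homogeneousCore_of_homogeneous_of_mem (hs x hx) (hsp hx)
  have hq_min : q ∈ (Ideal.span s).minimalPrimes :=
    Ideal.mem_minimalPrimes_span_of_mem_minimalPrimes_span_insert hqm f s
      (idealOfVars_mem_minimalPrimes (Ideal.span_le.2 hm) hrad) s hsq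
      fun x hx ↦ Ideal.le_radical (Ideal.subset_span (.inr hx))
  exact hl_notMem q ⟨hq_min, hmq⟩ hlq

lemma mem_span_range_of_idealOfVars_le_radical {ι : Type*} {a : ι → MvPolynomial σ k}
    (ha : ∀ i, (a i).IsHomogeneous 1)
    (hrad : idealOfVars σ k ≤ (Ideal.span (Set.range a)).radical) (j : σ) :
    X j ∈ Submodule.span k (Set.range a) := by
  by_contra hj
  obtain ⟨φ, hφj, hφa⟩ := Submodule.exists_dual_map_eq_bot_of_notMem hj inferInstance
  have eval_eq {p : MvPolynomial σ k} (hp : p.IsHomogeneous 1) :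
      eval (fun i ↦ φ (X i)) p = φ p := by
    rw [← mem_homogeneousSubmodule, homogeneousSubmodule_one_eq_span_X] at hp
    have : Set.EqOn (aeval (R := k) fun i ↦ φ (X i)).toLinearMap φ (Set.range X) := by
      rintro _ ⟨i, rfl⟩
      simp
    simpa [aeval_eq_eval] using LinearMap.eqOn_span this hp
  have hker : Ideal.span (Set.range a) ≤ RingHom.ker (eval fun i ↦ φ (X i)) := by
    rw [Ideal.span_le]
    rintro _ ⟨i, rfl⟩
    have hi := Submodule.mem_map_of_mem (f := φ)
      (Submodule.subset_span (Set.mem_range_self (f := a) i))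
    rw [hφa, Submodule.mem_bot] at hi
    rw [SetLike.mem_coe, RingHom.mem_ker, eval_eq (ha i), hi]
  have hXj := ((RingHom.ker_isPrime _).radical_le_iff.2 hker) (hrad (Ideal.subset_span ⟨j, rfl⟩))
  rw [RingHom.mem_ker, eval_X] at hXj
  exact hφj hXj

/-- Homogeneous polynomials of positive degrees `d i`, as many as there are variables, whose ideal
contains a power of every variable: a homogeneous system of parameters. -/
structure IsHomogeneousSOP (a : σ → MvPolynomial σ k) (d : σ → ℕ) : Prop where
  isHomogeneous (i : σ) : (a i).IsHomogeneous (d i)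
  pos (i : σ) : 0 < d i
  le_radical : idealOfVars σ k ≤ (Ideal.span (Set.range a)).radical

namespace IsHomogeneousSOP

variable {a : σ → MvPolynomial σ k} {d : σ → ℕ}

lemma isPermutablyRegular_of_linear [Finite σ] (ha : IsHomogeneousSOP a 1) :
    IsPermutablyRegular a := by
  have hadjoin : Algebra.adjoin k (Set.range a) = ⊤ := by
    rw [eq_top_iff, ← adjoin_range_X, Algebra.adjoin_le_iff]
    rintro _ ⟨j, rfl⟩
    exact Algebra.span_le_adjoin k _ (mem_span_range_of_idealOfVars_le_radical ha.1 ha.le_radical j)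
  have hmap := isPermutablyRegular_X.map
    (RingEquiv.ofBijective (aeval a) (bijective_aeval_of_adjoin_range_eq_top hadjoin))
  rwa [show ⇑(RingEquiv.ofBijective (aeval a) _) ∘ X = a from funext (aeval_X a)] at hmap

lemma idealOfVars_le_span_of_linear (ha : IsHomogeneousSOP a 1) :
    idealOfVars σ k ≤ Ideal.span (Set.range a) := by
  refine Ideal.span_le.2 (Set.range_subset_iff.2 fun j ↦ ?_)
  exact Submodule.span_le_restrictScalars k _ _
    (mem_span_range_of_idealOfVars_le_radical ha.1 ha.le_radical j)

lemma exists_update_linear [Finite σ] [Infinite k] [DecidableEq σ] (ha : IsHomogeneousSOP a d)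
    (i : σ) : ∃ l, IsHomogeneousSOP (Function.update a i l) (Function.update d i 1) := by
  obtain ⟨l, hl, hrad⟩ := exists_linear_idealOfVars_le_radical (s := a '' {i}ᶜ) (f := a i)
    (Set.forall_mem_image.2 fun j _ ↦ ⟨d j, ha.isHomogeneous j⟩)
    (by
      have h (j : σ) : a j ∈ idealOfVars σ k :=
        mem_idealOfVars_of_isHomogeneous (ha.isHomogeneous j) (ha.pos j)
      exact Set.insert_subset (h i) (Set.image_subset_iff.2 fun j _ ↦ h j))
    (by rw [Ideal.span_insert, ← span_range_eq_sup]; exact ha.le_radical)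
  refine ⟨l, fun j ↦ ?_, fun j ↦ ?_, ?_⟩
  · obtain rfl | hji := eq_or_ne j i
    · simpa using hl
    · simpa [hji] using ha.isHomogeneous j
  · obtain rfl | hji := eq_or_ne j i
    · simp
    · simpa [hji] using ha.pos j
  · rwa [span_range_eq_sup _ i, image_update_compl, Function.update_self, ← Ideal.span_insert]

theorem induction [Finite σ] [Infinite k] [DecidableEq σ]
    {P : (σ → MvPolynomial σ k) → (σ → ℕ) → Prop}
    (linear : ∀ a, IsHomogeneousSOP a 1 → P a 1)
    (update : ∀ a d i l, IsHomogeneousSOP a d →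
      IsHomogeneousSOP (Function.update a i l) (Function.update d i 1) →
      P (Function.update a i l) (Function.update d i 1) → P a d)
    (ha : IsHomogeneousSOP a d) : P a d := by
  have := Fintype.ofFinite σ
  suffices ∀ (s : Finset σ) a d, (∀ i ∉ s, d i = 1) → IsHomogeneousSOP a d → P a d from
    this Finset.univ a d (by simp) ha
  intro s
  induction s using Finset.induction_on with
  | empty =>
    intro a d hd ha
    obtain rfl : d = 1 := funext fun i ↦ hd i (Finset.notMem_empty i)
    exact linear a ha
  | insert i s _ ih =>
    intro a d hd ha
    obtain ⟨l, hl⟩ := ha.exists_update_linear i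
    refine update a d i l ha hl (ih _ _ (fun j hj ↦ ?_) hl)
    obtain rfl | hji := eq_or_ne j i
    · simp
    · simpa [hji] using hd j (by simp [hji, hj])

lemma exists_pow_mem_of_update [DecidableEq σ] {i : σ} {l : MvPolynomial σ k} {e : ℕ}
    (ha : IsHomogeneousSOP a d)
    (hl : IsHomogeneousSOP (Function.update a i l) (Function.update d i e)) :
    ∃ m, l ^ m ∈ Ideal.span {a i} ⊔ Ideal.span (a '' {i}ᶜ) := by
  rw [← span_range_eq_sup]
  exact ha.le_radical <| mem_idealOfVars_of_isHomogeneous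
    (by simpa using hl.isHomogeneous i) (by simpa using hl.pos i)

theorem isPermutablyRegular [Finite σ] [Infinite k] (ha : IsHomogeneousSOP a d) :
    IsPermutablyRegular a := by
  classical
  refine ha.induction (P := fun a _ ↦ IsPermutablyRegular a)
    (fun a ha ↦ ha.isPermutablyRegular_of_linear) fun a d i l ha hl hreg ↦ ?_
  obtain ⟨m, hm⟩ := ha.exists_pow_mem_of_update hl
  have hl_reg := hreg {i}ᶜ i (by simp)
  rw [image_update_compl, Function.update_self] at hl_reg
  refine hreg.exchange (𝒜 := homogeneousSubmodule σ k) hl.isHomogeneous hl.pos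
    (fun j hj ↦ Function.update_of_ne hj _ _) (ha.isHomogeneous i) ?_
  rw [image_update_compl]
  exact isSMulRegular_quotient_of_pow_mem hl_reg hm

theorem mem_span_range_of_sum_lt [Fintype σ] [Infinite k] (ha : IsHomogeneousSOP a d) {e : ℕ}
    {h : MvPolynomial σ k} (hh : h.IsHomogeneous e) (he : ∑ i, (d i - 1) < e) :
    h ∈ Ideal.span (Set.range a) := by
  classical
  refine ha.induction (P := fun a d ↦ ∀ ⦃e h⦄, h.IsHomogeneous e → ∑ i, (d i - 1) < e →
    h ∈ Ideal.span (Set.range a)) (fun a ha e h hh he ↦ ?_) (fun a d i l ha hl ih e h hh he ↦ ?_)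
    hh he
  · exact ha.idealOfVars_le_span_of_linear (mem_idealOfVars_of_isHomogeneous hh (by omega))
  have hsum : ∑ j, (d j - 1) = (d i - 1) + ∑ j, (Function.update d i 1 j - 1) := by
    rw [← Finset.add_sum_erase _ _ (Finset.mem_univ i),
      ← Finset.add_sum_erase _ (fun j ↦ Function.update d i 1 j - 1) (Finset.mem_univ i),
      Function.update_self, Nat.sub_self, zero_add]
    congr 1
    exact Finset.sum_congr rfl fun j hj ↦ by rw [Function.update_of_ne (Finset.ne_of_mem_erase hj)]
  obtain ⟨m, hm⟩ := ha.exists_pow_mem_of_update hl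
  have hl_reg := hl.isPermutablyRegular {i}ᶜ i (by simp)
  rw [image_update_compl, Function.update_self] at hl_reg
  rw [span_range_eq_sup _ i, image_update_compl, Function.update_self] at ih
  have hi := ha.pos i
  rw [span_range_eq_sup a i]
  refine mem_span_singleton_sup_of_pow_mem (𝒜 := homogeneousSubmodule σ k)
    (c := ∑ j, (Function.update d i 1 j - 1) + 1) (δ := 1)
    (Ideal.homogeneous_span _ _ (Set.forall_mem_image.2 fun j _ ↦ ⟨d j, ha.isHomogeneous j⟩))
    (by simpa using hl.isHomogeneous i) hl_reg (ha.isHomogeneous i) hm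
    (fun e he x hx ↦ ih hx he) (by omega) hh

end IsHomogeneousSOP

lemma idealOfVars_le_radical_span_range {K ι : Type*} [Finite σ] [Field K] [IsAlgClosed K]
    [Algebra k K] {a : ι → MvPolynomial σ k}
    (ha : ∀ z : σ → K, (∀ i, aeval z (a i) = 0) → z = 0) :
    idealOfVars σ k ≤ (Ideal.span (Set.range a)).radical := by
  rw [← vanishingIdeal_zeroLocus_eq_radical (K := K)]
  refine Ideal.span_le.2 (Set.range_subset_iff.2 fun j z hz ↦ ?_)
  rw [ha z fun i ↦ hz _ (Ideal.subset_span ⟨i, rfl⟩), aeval_X, Pi.zero_apply]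

end Polynomial

section Homogenization

variable {R : Type*} [CommSemiring R] {n d : ℕ}

/-- The `d`-homogenization, as in `homogenize`, over an arbitrary coefficient ring. It is meaningful
when the total degree is at most `d`, since the exponent of the new variable `X 0` is truncated. -/
noncomputable def homogenization (d : ℕ) (F : MvPolynomial (Fin n) R) :
    MvPolynomial (Fin (n + 1)) R :=
  ∑ s ∈ F.support, monomial (Finsupp.cons (d - s.sum fun _ e ↦ e) s) (coeff s F)

/-- Dehomogenization with respect to the variable `X 0`, inverse to `homogenization`. -/
noncomputable def dehomogenize : MvPolynomial (Fin (n + 1)) R →ₐ[R] MvPolynomial (Fin n) R :=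
  aeval (Fin.cons 1 X)

lemma homogenization_zero : homogenization d (0 : MvPolynomial (Fin n) R) = 0 := by
  rw [homogenization, support_zero, Finset.sum_empty]

lemma isHomogeneous_homogenization {F : MvPolynomial (Fin n) R} (hF : F.totalDegree ≤ d) :
    (homogenization d F).IsHomogeneous d := by
  refine IsHomogeneous.sum _ _ _ fun s hs ↦ isHomogeneous_monomial _ ?_
  have hsd : (s.sum fun _ e ↦ e) ≤ d := (le_totalDegree hs).trans hF
  rw [Finsupp.degree_eq_sum, Fin.sum_univ_succ]
  simp only [Finsupp.cons_zero, Finsupp.cons_succ]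
  rw [← Finsupp.sum_fintype s (fun _ e ↦ e) fun _ ↦ rfl, Nat.sub_add_cancel hsd]

lemma dehomogenize_X_zero : dehomogenize (X 0 : MvPolynomial (Fin (n + 1)) R) = 1 := by
  rw [dehomogenize, aeval_X, Fin.cons_zero]

lemma dehomogenize_monomial (m : Fin (n + 1) →₀ ℕ) (c : R) :
    dehomogenize (monomial m c) = monomial m.tail c := by
  rw [dehomogenize, aeval_monomial, monomial_eq, Finsupp.prod_fintype _ _ fun _ ↦ pow_zero _,
    Finsupp.prod_fintype _ _ fun _ ↦ pow_zero _, Fin.prod_univ_succ]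
  simp [algebraMap_eq, Finsupp.tail_apply]

lemma dehomogenize_homogenization (F : MvPolynomial (Fin n) R) :
    dehomogenize (homogenization d F) = F := by
  simp only [homogenization, map_sum, dehomogenize_monomial, Finsupp.tail_cons]
  exact F.support_sum_monomial_coeff

lemma totalDegree_dehomogenize_le (p : MvPolynomial (Fin (n + 1)) R) :
    (dehomogenize p).totalDegree ≤ p.totalDegree := by
  conv_lhs => rw [← p.support_sum_monomial_coeff]
  rw [map_sum]
  refine totalDegree_finsetSum_le fun m hm ↦ ?_
  rw [dehomogenize_monomial]
  refine (totalDegree_monomial_le _ _).trans (le_trans ?_ (le_totalDegree hm))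
  rw [Finsupp.sum_fintype _ _ fun _ ↦ rfl, Finsupp.sum_fintype _ _ fun _ ↦ rfl,
    Fin.sum_univ_succ]
  simp [Finsupp.tail_apply]

end Homogenization

section Macaulay

lemma exists_sum_mul_eq_one_of_isUnit {ι σ R : Type*} [CommSemiring R] [Fintype ι]
    {F : ι → MvPolynomial σ R} {j : ι} (hF : IsUnit (F j)) : ∃ Q : ι → MvPolynomial σ R,
      ∑ i, F i * Q i = 1 ∧ ∀ i, (F i * Q i).totalDegree = 0 := by
  classical
  obtain ⟨G, hG⟩ := hF.exists_right_inv
  refine ⟨Pi.single j G, ?_, fun i ↦ ?_⟩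
  · rw [← hG, Fintype.sum_eq_single j fun i hi ↦ by rw [Pi.single_eq_of_ne hi, mul_zero],
      Pi.single_eq_same]
  · obtain rfl | hi := eq_or_ne i j
    · rw [Pi.single_eq_same, hG, totalDegree_one]
    · rw [Pi.single_eq_of_ne hi, mul_zero, totalDegree_zero]

attribute [local instance] MvPolynomial.gradedAlgebra

variable {k K : Type*} [Field k] [Field K] [IsAlgClosed K] [Algebra k K] {n : ℕ}
  {F : Fin (n + 1) → MvPolynomial (Fin n) k} {d : Fin (n + 1) → ℕ}

lemma isHomogeneousSOP_homogenization [Infinite k] (hdeg : ∀ j, (F j).totalDegree ≤ d j)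
    (hnozero : ∀ z : Fin (n + 1) → K,
      (∀ j, aeval z (homogenization (d j) (F j)) = 0) → z = 0)
    (hzero : ∀ j, d j = 0 → F j = 0) :
    IsHomogeneousSOP (fun j ↦ homogenization (d j) (F j)) d := by
  have hhom (j) : (homogenization (d j) (F j)).IsHomogeneous (d j) :=
    isHomogeneous_homogenization (hdeg j)
  have hrad := idealOfVars_le_radical_span_range hnozero
  have hsop : IsHomogeneousSOP (fun j ↦ homogenization (d j) (F j)) fun j ↦ max (d j) 1 := by
    refine ⟨fun j ↦ ?_, fun j ↦ by simp, hrad⟩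
    obtain hj | hj := Nat.eq_zero_or_pos (d j)
    · rw [hzero j hj, homogenization_zero]
      exact isHomogeneous_zero _ _ _
    · exact (max_eq_left (Nat.succ_le_of_lt hj)).symm ▸ hhom j
  refine ⟨hhom, fun j ↦ Nat.pos_of_ne_zero fun hj ↦ ?_, hrad⟩
  exact hsop.isPermutablyRegular.ne_zero j (by simp only [hzero j hj, homogenization_zero])

lemma IsHomogeneousSOP.exists_sum_mul_eq_one [Infinite k]
    (hF : IsHomogeneousSOP (fun j ↦ homogenization (d j) (F j)) d) :
    ∃ Q : Fin (n + 1) → MvPolynomial (Fin n) k,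
      ∑ j, F j * Q j = 1 ∧ ∀ j, (F j * Q j).totalDegree ≤ (∑ j, d j) - n := by
  have hlt : ∑ j, (d j - 1) < ∑ j, d j - n := by
    have hsum : ∑ j, d j = ∑ j, (d j - 1) + (n + 1) := by
      calc ∑ j, d j = ∑ j, (d j - 1 + 1) :=
            Finset.sum_congr rfl fun j _ ↦ (Nat.sub_add_cancel (hF.pos j)).symm
        _ = ∑ j, (d j - 1) + (n + 1) := by simp [Finset.sum_add_distrib]
    omega
  obtain ⟨q, hq_sum, hq_deg⟩ := exists_sum_mul_eq_of_mem_span_range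
    (𝒜 := homogeneousSubmodule (Fin (n + 1)) k) hF.isHomogeneous
    (isHomogeneous_X_pow 0 (∑ j, d j - n))
    (hF.mem_span_range_of_sum_lt (isHomogeneous_X_pow 0 _) hlt)
  refine ⟨fun j ↦ dehomogenize (q j), ?_, fun j ↦ ?_⟩
  · simpa only [map_sum, map_mul, map_pow, dehomogenize_homogenization, dehomogenize_X_zero,
      one_pow] using congrArg dehomogenize hq_sum
  · calc (F j * dehomogenize (q j)).totalDegree
        = (dehomogenize (homogenization (d j) (F j) * q j)).totalDegree := by
          rw [map_mul, dehomogenize_homogenization]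
      _ ≤ (homogenization (d j) (F j) * q j).totalDegree := totalDegree_dehomogenize_le _
      _ ≤ ∑ j, d j - n := IsHomogeneous.totalDegree_le (hq_deg j)

theorem macaulay_general [Infinite k] (hdeg : ∀ j, (F j).totalDegree ≤ d j)
    (hnozero : ∀ z : Fin (n + 1) → K,
      (∀ j, aeval z (homogenization (d j) (F j)) = 0) → z = 0) :
    ∃ Q : Fin (n + 1) → MvPolynomial (Fin n) k,
      ∑ j, F j * Q j = 1 ∧ ∀ j, (F j * Q j).totalDegree ≤ (∑ j, d j) - n := by
  by_cases hzero : ∀ j, d j = 0 → F j = 0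
  · exact (isHomogeneousSOP_homogenization hdeg hnozero hzero).exists_sum_mul_eq_one
  · push Not at hzero
    obtain ⟨j, hdj, hFj⟩ := hzero
    have hFj_const := totalDegree_eq_zero_iff_eq_C.1 (Nat.le_zero.1 (hdj ▸ hdeg j))
    have hunit : IsUnit (F j) := by
      rw [hFj_const] at hFj ⊢
      exact (Ne.isUnit fun h ↦ hFj (by rw [h, C_0])).map C
    obtain ⟨Q, hQ, hQ_deg⟩ := exists_sum_mul_eq_one_of_isUnit hunit
    exact ⟨Q, hQ, fun i ↦ (hQ_deg i).trans_le (Nat.zero_le _)⟩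

end Macaulay

/-- Macaulay's theorem: if `F_1,…,F_{n+1}` have degrees `d_1,…,d_{n+1}` and their
homogenizations have no common zero in `ℙ^n` (only the trivial common zero in `ℂ^{n+1}`),
then the Bézout equation `Σ F_j Q_j = 1` has a solution with
`deg (F_j Q_j) ≤ d_1 + ⋯ + d_{n+1} − n`. -/
theorem macaulay (n : ℕ) (F : Fin (n + 1) → MvPolynomial (Fin n) ℂ) (d : Fin (n + 1) → ℕ)
    (hdeg : ∀ j, (F j).totalDegree = d j)
    (hnozero : ∀ z : Fin (n + 1) → ℂ,
      (∀ j, eval z (homogenize n (d j) (F j)) = 0) → z = 0) :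
    ∃ Q : Fin (n + 1) → MvPolynomial (Fin n) ℂ,
      (∑ j, F j * Q j = 1) ∧
      ∀ j, (F j * Q j).totalDegree ≤ (∑ j, d j) - n :=
  macaulay_general (fun j ↦ (hdeg j).le) fun z hz ↦ hnozero z hz
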